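/- Under the stated hypotheses, the spectrum of B = A + V is contained in the closed δ_V-neighborhood of the spectrum of A, i.e. spec(B) ⊆ { λ ∈ ℝ : dist(λ, spec(A)) ≤ δ_V }, where δ_V = ‖V‖·tan((1/2)·arctan(2‖V‖/d)). -/

import Mathlib

/-- `E` is the projection-valued spectral measure of the bounded self-adjoint operator `T`
on the complex Hilbert space `H`: each `E Δ` (for Borel `Δ ⊆ ℝ`) is an orthogonal
projection, `E` is multiplicative and countably additive (in the strong sense), `E ℝ = 1`,
each `E Δ` commutes with `T`, and on the range of `E Δ` the operator `T` has its
approximate point spectrum inside the closure of `Δ` (which uniquely characterizes the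
spectral measure of `T`). -/
structure IsSpectralMeasure {H : Type*} [NormedAddCommGroup H] [InnerProductSpace ℂ H]
    [CompleteSpace H] (T : H →L[ℂ] H) (E : Set ℝ → H →L[ℂ] H) : Prop where
  isSelfAdjoint : ∀ Δ : Set ℝ, MeasurableSet Δ → IsSelfAdjoint (E Δ)
  map_inter : ∀ Δ₁ Δ₂ : Set ℝ, MeasurableSet Δ₁ → MeasurableSet Δ₂ →
    E Δ₁ * E Δ₂ = E (Δ₁ ∩ Δ₂)
  map_univ : E Set.univ = 1
  countably_additive : ∀ Δ : ℕ → Set ℝ, (∀ n, MeasurableSet (Δ n)) →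
    Pairwise (Function.onFun Disjoint Δ) →
    ∀ x : H, HasSum (fun n => E (Δ n) x) (E (⋃ n, Δ n) x)
  commutes : ∀ Δ : Set ℝ, MeasurableSet Δ → Commute T (E Δ)
  spectrum_loc : ∀ Δ : Set ℝ, MeasurableSet Δ → ∀ x : H, E Δ x = x →
    ∀ μ : ℝ, Metric.infDist μ Δ * ‖x‖ ≤ ‖T x - (μ : ℂ) • x‖

open scoped InnerProductSpace ComplexOrder

theorem two_mul_mul_mul_le {p q n a b : ℝ} (hp : 0 ≤ p) (hq : 0 ≤ q) (h : p * q = n ^ 2) :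
    2 * (n * a * b) ≤ p * a ^ 2 + q * b ^ 2 := by
  refine le_of_abs_le (abs_le_of_sq_le_sq ?_ (by positivity))
  linear_combination (-4 * a ^ 2 * b ^ 2) * h + sq_nonneg (p * a ^ 2 - q * b ^ 2)

section Operators

variable {H : Type*} [NormedAddCommGroup H] [InnerProductSpace ℂ H] [CompleteSpace H]

/-- A real number at which a self-adjoint operator is bounded below is not in its spectrum. -/
theorem IsSelfAdjoint.notMem_spectrum_of_bound {T : H →L[ℂ] H} (hT : IsSelfAdjoint T) {ν c : ℝ}
    (hc : 0 < c) (h : ∀ x, c * ‖x‖ ≤ ‖T x - (ν : ℂ) • x‖) : ν ∉ spectrum ℝ T := by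
  have hS : IsSelfAdjoint (T - algebraMap ℝ (H →L[ℂ] H) ν) :=
    hT.sub (IsSelfAdjoint.algebraMap _ (IsSelfAdjoint.all ν))
  have hSx : ∀ x, (T - algebraMap ℝ (H →L[ℂ] H) ν) x = T x - (ν : ℂ) • x := fun x => by
    simp [Algebra.algebraMap_eq_smul_one]
  set S := T - algebraMap ℝ (H →L[ℂ] H) ν
  have hunit : IsUnit (S * S) := by
    refine ContinuousLinearMap.isUnit_of_forall_le_norm_inner_map (S * S)
      (c := ⟨c ^ 2, by positivity⟩) (by exact_mod_cast pow_pos hc 2) fun x => ?_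
    have h1 : ⟪(S * S) x, x⟫_ℂ = ⟪S x, S x⟫_ℂ := hS.isSymmetric (S x) x
    rw [h1, inner_self_eq_norm_sq_to_K, norm_pow, RCLike.norm_ofReal, abs_norm, hSx]
    have := h x
    calc ‖x‖ ^ 2 * c ^ 2 = (c * ‖x‖) ^ 2 := by ring
      _ ≤ _ := by gcongr
  rw [spectrum.notMem_iff, ← IsUnit.neg_iff, neg_sub]
  exact ((Commute.refl S).isUnit_mul_iff.1 hunit).1

/-- Compressing a self-adjoint operator to a reducing subspace on which it is bounded below
at every negative number, with the sharp constant, gives a nonnegative operator. -/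
theorem mul_proj_nonneg {T E : H →L[ℂ] H} (hT : IsSelfAdjoint T) (hE : IsSelfAdjoint E)
    (hEE : E * E = E) (hTE : Commute T E)
    (h : ∀ x, E x = x → ∀ ν : ℝ, ν < 0 → |ν| * ‖x‖ ≤ ‖T x - (ν : ℂ) • x‖) : 0 ≤ T * E := by
  have hsa : IsSelfAdjoint (T * E) := (hT.commute_iff hE).1 hTE
  rw [StarOrderedRing.nonneg_iff_spectrum_nonneg (R := ℝ) (T * E) hsa]
  intro ν hν
  by_contra! hneg
  refine hsa.notMem_spectrum_of_bound (abs_pos.2 hneg.ne) (fun x => ?_) hν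
  have hEy : E (E x) = E x := congrArg (· x) hEE
  have hEw : E (T (E x) - (ν : ℂ) • E x) = T (E x) - (ν : ℂ) • E x := by
    have : E (T (E x)) = T (E (E x)) := (congrArg (· (E x)) hTE.eq).symm
    simp [this, hEy]
  have horth : ∀ w, E w = w → ⟪w, x - E x⟫_ℂ = 0 := fun w hw => by
    rw [← hw, show ⟪E w, x - E x⟫_ℂ = ⟪w, E (x - E x)⟫_ℂ from hE.isSymmetric _ _]
    simp [hEy]
  have hx : ‖x‖ ^ 2 = ‖E x‖ ^ 2 + ‖x - E x‖ ^ 2 := by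
    have := @norm_add_sq ℂ _ _ _ _ (E x) (x - E x)
    rw [horth _ hEy] at this
    simpa using this
  have hTx : ‖(T * E) x - (ν : ℂ) • x‖ ^ 2
      = ‖T (E x) - (ν : ℂ) • E x‖ ^ 2 + |ν| ^ 2 * ‖x - E x‖ ^ 2 := by
    have h1 := @norm_sub_sq ℂ _ _ _ _ (T (E x) - (ν : ℂ) • E x) ((ν : ℂ) • (x - E x))
    rw [inner_smul_right, horth _ hEw, norm_smul] at h1
    have h2 : (T * E) x - (ν : ℂ) • x
        = T (E x) - (ν : ℂ) • E x - (ν : ℂ) • (x - E x) := by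
      simp [smul_sub]
    rw [h2, h1]
    simp [mul_pow]
  refine (sq_le_sq₀ (by positivity) (norm_nonneg _)).1 ?_
  have h1 := pow_le_pow_left₀ (by positivity) (h (E x) hEy ν hneg) 2
  rw [hTx, mul_pow, hx]
  rw [mul_pow] at h1
  linarith

end Operators

namespace IsSpectralMeasure

variable {H : Type*} [NormedAddCommGroup H] [InnerProductSpace ℂ H] [CompleteSpace H]
  {A : H →L[ℂ] H} {E : Set ℝ → H →L[ℂ] H}

theorem map_empty (hE : IsSpectralMeasure A E) : E ∅ = 0 := by
  ext x
  have h := hE.countably_additive (fun _ => ∅) (fun _ => MeasurableSet.empty)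
    (fun _ _ _ => by simp [Function.onFun]) x
  simpa using (summable_const_iff _).1 h.summable

theorem map_union (hE : IsSpectralMeasure A E) {S T : Set ℝ} (hS : MeasurableSet S)
    (hT : MeasurableSet T) (hST : Disjoint S T) : E (S ∪ T) = E S + E T := by
  ext x
  let f : ℕ → Set ℝ := fun n => if n = 0 then S else if n = 1 then T else ∅
  have hU : ⋃ n, f n = S ∪ T := by
    ext y
    simp only [Set.mem_iUnion, Set.mem_union, f]
    constructor
    · rintro ⟨n, hn⟩
      split_ifs at hn with h0 h1
      exacts [Or.inl hn, Or.inr hn, hn.elim]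
    · rintro (h | h)
      exacts [⟨0, by simpa using h⟩, ⟨1, by simpa using h⟩]
  have h := hE.countably_additive f
    (fun n => by simp only [f]; split_ifs <;> simp [hS, hT])
    (fun i j hij => by
      simp only [Function.onFun, f]
      split_ifs <;> first | omega | simp [hST.symm]) x
  rw [hU] at h
  have h2 := hasSum_sum_of_ne_finset_zero (L := .unconditional ℕ)
    (f := fun n => E (f n) x) (s := Finset.range 2)
    (fun n hn => by
      have : n ≠ 0 ∧ n ≠ 1 := by rw [Finset.mem_range] at hn; omega
      simp [f, this, hE.map_empty])
  rw [h.unique h2]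
  simp [Finset.sum_range_succ, f]

theorem apply_eq_self_of_subset (hE : IsSpectralMeasure A E) {S T : Set ℝ} (hS : MeasurableSet S)
    (hT : MeasurableSet T) (hST : S ⊆ T) {x : H} (hx : E S x = x) : E T x = x := by
  have h := congrArg (· x) (hE.map_inter T S hT hS)
  simpa [Set.inter_eq_right.2 hST, hx] using h

theorem apply_apply_self (hE : IsSpectralMeasure A E) {S : Set ℝ} (hS : MeasurableSet S) (x : H) :
    E S (E S x) = E S x := by
  simpa using congrArg (· x) (hE.map_inter S S hS hS)

theorem neg (hE : IsSpectralMeasure A E) : IsSpectralMeasure (-A) (fun S => E (-S)) where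
  isSelfAdjoint S hS := hE.isSelfAdjoint _ hS.neg
  map_inter S T hS hT := by rw [hE.map_inter _ _ hS.neg hT.neg, Set.inter_neg]
  map_univ := by simpa using hE.map_univ
  countably_additive S hS hd x := by
    have h := hE.countably_additive (fun n => -S n) (fun n => (hS n).neg)
      (fun i j hij => by
        have := hd hij
        simp only [Function.onFun] at this ⊢
        exact this.preimage _) x
    simpa [Set.iUnion_neg] using h
  commutes S hS := (hE.commutes _ hS.neg).neg_left
  spectrum_loc S hS x hx μ := by
    have h := hE.spectrum_loc (-S) hS.neg x hx (-μ)
    have hi : Metric.infDist (-μ) (-S) = Metric.infDist μ S := by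
      rw [← Set.image_neg_eq_neg]
      exact Metric.infDist_image (IsometryEquiv.neg ℝ).isometry
    rw [hi] at h
    refine h.trans_eq ?_
    rw [← norm_neg]
    congr 1
    simp
    abel

theorem nonneg_of_subset_Ici (hE : IsSpectralMeasure A E) (hA : IsSelfAdjoint A) {S : Set ℝ}
    (hS : MeasurableSet S) {t : ℝ} (hSt : S ⊆ Set.Ici t) :
    0 ≤ (A - algebraMap ℝ (H →L[ℂ] H) t) * E S := by
  refine mul_proj_nonneg (hA.sub (IsSelfAdjoint.algebraMap _ (IsSelfAdjoint.all t)))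
    (hE.isSelfAdjoint S hS) (by simpa using hE.map_inter S S hS hS)
    ((hE.commutes S hS).sub_left (Algebra.commutes t (E S))) (fun x hx ν hν => ?_)
  rcases S.eq_empty_or_nonempty with rfl | hne
  · have : x = 0 := by simpa [hE.map_empty] using hx.symm
    simp [this]
  · have h := hE.spectrum_loc S hS x hx (t + ν)
    have hd : |ν| ≤ Metric.infDist (t + ν) S := by
      refine (Metric.le_infDist hne).2 fun y hy => ?_
      have := hSt hy
      rw [Set.mem_Ici] at this
      rw [Real.dist_eq, abs_of_neg hν, abs_of_nonpos (by linarith)]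
      linarith
    refine (mul_le_mul_of_nonneg_right hd (norm_nonneg x)).trans (h.trans_eq ?_)
    congr 1
    simp [Algebra.algebraMap_eq_smul_one, add_smul]
    abel

theorem le_re_inner_of_subset_Ici (hE : IsSpectralMeasure A E) (hA : IsSelfAdjoint A) {S : Set ℝ}
    (hS : MeasurableSet S) {t : ℝ} (hSt : S ⊆ Set.Ici t) {x : H} (hx : E S x = x) :
    t * ‖x‖ ^ 2 ≤ (⟪A x, x⟫_ℂ).re := by
  have h := (ContinuousLinearMap.nonneg_iff_isPositive _).1 (hE.nonneg_of_subset_Ici hA hS hSt)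
  have h0 := h.re_inner_nonneg_left x
  have hx' : ((A - algebraMap ℝ (H →L[ℂ] H) t) * E S) x = A x - (t : ℂ) • x := by
    simp [Algebra.algebraMap_eq_smul_one, hx]
  have hn : (⟪x, x⟫_ℂ).re = ‖x‖ ^ 2 := inner_self_eq_norm_sq (𝕜 := ℂ) x
  rw [hx', inner_sub_left, inner_smul_left] at h0
  simp only [Complex.conj_ofReal, RCLike.re_to_complex, Complex.sub_re,
    Complex.re_ofReal_mul, hn] at h0
  linarith

theorem map_ball_eq_zero_of_bound (hE : IsSpectralMeasure A E) (hA : IsSelfAdjoint A) {μ c r : ℝ}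
    (hr : 0 ≤ r) (hrc : r < c) (h : ∀ x, c * ‖x‖ ≤ ‖A x - (μ : ℂ) • x‖) :
    E (Metric.ball μ r) = 0 := by
  have hB : MeasurableSet (Metric.ball μ r) := Metric.isOpen_ball.measurableSet
  have h1 := hE.nonneg_of_subset_Ici hA hB (t := μ - r) (fun y hy => by
    rw [Metric.mem_ball, Real.dist_eq, abs_lt] at hy
    rw [Set.mem_Ici]; linarith)
  have h2 := hE.neg.nonneg_of_subset_Ici hA.neg hB.neg (t := -(μ + r)) (fun y hy => by
    rw [Set.mem_neg, Metric.mem_ball, Real.dist_eq, abs_lt] at hy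
    rw [Set.mem_Ici]; linarith)
  rw [neg_neg] at h2
  have hcA : Commute (A - algebraMap ℝ (H →L[ℂ] H) (μ - r)) (E (Metric.ball μ r)) :=
    (hE.commutes _ hB).sub_left (Algebra.commutes _ _)
  have hcA' : Commute (-A - algebraMap ℝ (H →L[ℂ] H) (-(μ + r))) (E (Metric.ball μ r)) :=
    (hE.commutes _ hB).neg_left.sub_left (Algebra.commutes _ _)
  have hcAA : Commute (A - algebraMap ℝ (H →L[ℂ] H) (μ - r))
      (-A - algebraMap ℝ (H →L[ℂ] H) (-(μ + r))) :=
    ((Commute.refl A).neg_right.sub_right (Algebra.commutes _ _).symm).sub_left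
      (Algebra.commutes _ _)
  have h3 := Commute.mul_nonneg h1 h2
    ((hcAA.mul_right hcA).mul_left (hcA'.symm.mul_right (Commute.refl _)))
  ext x
  set y := E (Metric.ball μ r) x with hy
  have hEy : E (Metric.ball μ r) y = y := hE.apply_apply_self hB x
  have h4 := ((ContinuousLinearMap.nonneg_iff_isPositive _).1 h3).re_inner_nonneg_left y
  have hsa : IsSelfAdjoint (A - algebraMap ℝ (H →L[ℂ] H) (μ - r)) :=
    hA.sub (IsSelfAdjoint.algebraMap _ (IsSelfAdjoint.all _))
  set w := A y - (μ : ℂ) • y with hw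
  have e1 : (-A - algebraMap ℝ (H →L[ℂ] H) (-(μ + r))) y = (r : ℂ) • y - w := by
    simp [Algebra.algebraMap_eq_smul_one, hw, add_smul]
    abel
  have e2 : (A - algebraMap ℝ (H →L[ℂ] H) (μ - r)) y = (r : ℂ) • y + w := by
    simp [Algebra.algebraMap_eq_smul_one, hw, sub_smul]
    abel
  have e3 : E (Metric.ball μ r) ((r : ℂ) • y - w) = (r : ℂ) • y - w := by
    rw [← e1, ← mul_apply_eq_comp, ← hcA'.eq, mul_apply_eq_comp, hEy]
  have e4 : ((A - algebraMap ℝ (H →L[ℂ] H) (μ - r)) * E (Metric.ball μ r) *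
      ((-A - algebraMap ℝ (H →L[ℂ] H) (-(μ + r))) * E (Metric.ball μ r))) y
      = (A - algebraMap ℝ (H →L[ℂ] H) (μ - r)) ((r : ℂ) • y - w) := by
    simp only [mul_apply_eq_comp, hEy, e1, e3]
  have e5 : ⟪(A - algebraMap ℝ (H →L[ℂ] H) (μ - r)) ((r : ℂ) • y - w), y⟫_ℂ
      = ⟪(r : ℂ) • y - w, (r : ℂ) • y + w⟫_ℂ := by
    rw [← e2]
    exact hsa.isSymmetric _ _
  have e6 : (⟪(r : ℂ) • y - w, (r : ℂ) • y + w⟫_ℂ).re = r ^ 2 * ‖y‖ ^ 2 - ‖w‖ ^ 2 := by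
    have h1 : (⟪(r : ℂ) • y, (r : ℂ) • y⟫_ℂ).re = ‖(r : ℂ) • y‖ ^ 2 :=
      inner_self_eq_norm_sq (𝕜 := ℂ) _
    have h2 : (⟪w, w⟫_ℂ).re = ‖w‖ ^ 2 := inner_self_eq_norm_sq (𝕜 := ℂ) _
    have h3 : (⟪w, (r : ℂ) • y⟫_ℂ).re = (⟪(r : ℂ) • y, w⟫_ℂ).re := inner_re_symm (𝕜 := ℂ) _ _
    rw [norm_smul, Complex.norm_real, mul_pow, Real.norm_eq_abs, sq_abs] at h1
    rw [inner_sub_left, inner_add_right, inner_add_right, Complex.sub_re, Complex.add_re,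
      Complex.add_re, h1, h2, h3]
    ring
  rw [e4, e5, RCLike.re_to_complex, e6] at h4
  have h5 : ‖w‖ ≤ r * ‖y‖ := (sq_le_sq₀ (norm_nonneg _) (by positivity)).1 (by
    rw [mul_pow]; linarith)
  have h6 : ‖y‖ = 0 := by
    have := (h y).trans h5
    nlinarith [norm_nonneg y]
  simpa using h6

theorem map_ball_eq_zero_of_notMem_spectrum (hE : IsSpectralMeasure A E) (hA : IsSelfAdjoint A)
    {μ : ℝ} (hμ : μ ∉ spectrum ℝ A) : ∃ r > 0, E (Metric.ball μ r) = 0 := by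
  rw [spectrum.notMem_iff, ← IsUnit.neg_iff, neg_sub,
    ContinuousLinearMap.isUnit_iff_bijective] at hμ
  obtain ⟨-, K, hK⟩ :=
    (ContinuousLinearMap.bijective_iff_dense_range_and_antilipschitz _).1 hμ
  have hb := ContinuousLinearMap.bound_of_antilipschitz _ hK
  have hK0 : (0 : ℝ) < K + 1 := by positivity
  refine ⟨((K : ℝ) + 1)⁻¹ / 2, by positivity, hE.map_ball_eq_zero_of_bound hA (by positivity)
    (half_lt_self (inv_pos.2 hK0)) fun x => ?_⟩
  have h := hb x
  have hx : (A - algebraMap ℝ (H →L[ℂ] H) μ) x = A x - (μ : ℂ) • x := by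
    simp [Algebra.algebraMap_eq_smul_one]
  rw [hx] at h
  rw [inv_mul_le_iff₀ hK0]
  exact h.trans (by gcongr; linarith)

theorem map_iUnion_eq_zero (hE : IsSpectralMeasure A E) {S : ℕ → Set ℝ}
    (hS : ∀ n, MeasurableSet (S n)) (h : ∀ n, E (S n) = 0) : E (⋃ n, S n) = 0 := by
  ext x
  have h0 : ∀ n, E (disjointed S n) = 0 := fun n => by
    have := hE.map_inter _ _ (hS n) (MeasurableSet.disjointed hS n)
    rwa [Set.inter_eq_right.2 (disjointed_subset S n), h n, zero_mul, eq_comm] at this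
  have hsum := hE.countably_additive (disjointed S) (MeasurableSet.disjointed hS)
    (disjoint_disjointed S) x
  rw [iUnion_disjointed] at hsum
  simp only [h0] at hsum
  simpa using hsum.unique hasSum_zero

theorem map_spectrum (hE : IsSpectralMeasure A E) (hA : IsSelfAdjoint A) :
    E (spectrum ℝ A) = 1 := by
  have hm : MeasurableSet (spectrum ℝ A) := (spectrum.isClosed A).measurableSet
  have hc : E (spectrum ℝ A)ᶜ = 0 := by
    choose! r hr0 hr using fun μ (hμ : μ ∈ (spectrum ℝ A)ᶜ) =>
      hE.map_ball_eq_zero_of_notMem_spectrum hA hμ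
    obtain ⟨t, ht, htc, hcov⟩ := TopologicalSpace.countable_cover_nhdsWithin
      (f := fun μ => Metric.ball μ (r μ)) (s := (spectrum ℝ A)ᶜ)
      (fun μ hμ => mem_nhdsWithin_of_mem_nhds (Metric.ball_mem_nhds μ (hr0 μ hμ)))
    rcases t.eq_empty_or_nonempty with rfl | hne
    · rw [Set.biUnion_empty, Set.subset_empty_iff] at hcov
      rw [hcov, hE.map_empty]
    obtain ⟨f, rfl⟩ := htc.exists_eq_range hne
    rw [Set.biUnion_range] at hcov
    have hU := hE.map_iUnion_eq_zero (S := fun n => Metric.ball (f n) (r (f n)))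
      (fun n => Metric.isOpen_ball.measurableSet) (fun n => hr _ (ht ⟨n, rfl⟩))
    have := hE.map_inter _ _
      (MeasurableSet.iUnion fun n => (Metric.isOpen_ball (x := f n) (ε := r (f n))).measurableSet)
      hm.compl
    rwa [Set.inter_eq_right.2 hcov, hU, zero_mul, eq_comm] at this
  have h := hE.map_union hm hm.compl disjoint_compl_right
  rwa [Set.union_compl_self, hE.map_univ, hc, add_zero, eq_comm] at h

theorem inner_eq_zero_of_disjoint (hE : IsSpectralMeasure A E) {S T : Set ℝ}
    (hS : MeasurableSet S) (hT : MeasurableSet T) (hST : Disjoint S T) {x y : H}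
    (hx : E S x = x) (hy : E T y = y) : ⟪x, y⟫_ℂ = 0 := by
  have h : ⟪E S x, E T y⟫_ℂ = ⟪x, E S (E T y)⟫_ℂ := (hE.isSelfAdjoint S hS).isSymmetric _ _
  rw [← mul_apply_eq_comp, hE.map_inter S T hS hT, Set.disjoint_iff_inter_eq_empty.1 hST,
    hE.map_empty, hx, hy] at h
  simpa using h

theorem inner_apply_eq_zero_of_compression_eq_zero (hE : IsSpectralMeasure A E) {S : Set ℝ}
    (hS : MeasurableSet S) {V : H →L[ℂ] H} (hV : E S * V * E S = 0) {x : H} (hx : E S x = x) :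
    ⟪V x, x⟫_ℂ = 0 := by
  have h : ⟪E S (V (E S x)), x⟫_ℂ = ⟪V (E S x), E S x⟫_ℂ :=
    (hE.isSelfAdjoint S hS).isSymmetric _ _
  rw [show E S (V (E S x)) = 0 from congrArg (· x) hV, hx] at h
  simpa using h.symm

/-- Lower bound for the form of an off-diagonal perturbation of `A` on the spectral subspace of
`A` to the right of `l`, when the spectrum of `A` has distance at least `m` from `l`. -/
theorem le_re_inner_of_offDiagonal (hE : IsSpectralMeasure A E) (hA : IsSelfAdjoint A)
    {V : H →L[ℂ] H} {σ τ : Set ℝ} (hσ : MeasurableSet σ)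
    (hτ : MeasurableSet τ) (hστ : Disjoint σ τ) (htot : E (σ ∪ τ) = 1)
    (hVσ : E σ * V * E σ = 0) (hVτ : E τ * V * E τ = 0)
    {d δ m l : ℝ} (hd : ∀ s ∈ σ, ∀ t ∈ τ, d ≤ |s - t|) (hd0 : 0 ≤ d) (hδ : 0 ≤ δ)
    (hδV : δ * (δ + d) = ‖V‖ ^ 2) (hm : ∀ s ∈ σ ∪ τ, m ≤ |s - l|)
    {y : H} (hy : E (Set.Ici l) y = y) :
    (m - δ) * ‖y‖ ^ 2 ≤ (⟪(A + V) y - (l : ℂ) • y, y⟫_ℂ).re := by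
  have hI : MeasurableSet (Set.Ici l) := measurableSet_Ici
  have hσI := hσ.inter hI
  have hτI := hτ.inter hI
  have hdisj : Disjoint (σ ∩ Set.Ici l) (τ ∩ Set.Ici l) :=
    hστ.mono Set.inter_subset_left Set.inter_subset_left
  set u := E (σ ∩ Set.Ici l) y
  set v := E (τ ∩ Set.Ici l) y
  have hu : E (σ ∩ Set.Ici l) u = u := hE.apply_apply_self hσI y
  have hv : E (τ ∩ Set.Ici l) v = v := hE.apply_apply_self hτI y
  have hyuv : y = u + v := by
    have h := congrArg (· y) (hE.map_inter _ _ (hσ.union hτ) hI)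
    rw [Set.union_inter_distrib_right, hE.map_union hσI hτI hdisj] at h
    simpa [htot, hy] using h
  have hAu : E (σ ∩ Set.Ici l) (A u) = A u := by
    rw [← mul_apply_eq_comp, ← (hE.commutes _ hσI).eq, mul_apply_eq_comp, hu]
  have hAv : E (τ ∩ Set.Ici l) (A v) = A v := by
    rw [← mul_apply_eq_comp, ← (hE.commutes _ hτI).eq, mul_apply_eq_comp, hv]
  have huv : ⟪u, v⟫_ℂ = 0 := hE.inner_eq_zero_of_disjoint hσI hτI hdisj hu hv
  have hvu : ⟪v, u⟫_ℂ = 0 := hE.inner_eq_zero_of_disjoint hτI hσI hdisj.symm hv hu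
  have hAuv : ⟪A u, v⟫_ℂ = 0 := hE.inner_eq_zero_of_disjoint hσI hτI hdisj hAu hv
  have hAvu : ⟪A v, u⟫_ℂ = 0 := hE.inner_eq_zero_of_disjoint hτI hσI hdisj.symm hAv hu
  have hVu : ⟪V u, u⟫_ℂ = 0 := hE.inner_apply_eq_zero_of_compression_eq_zero hσ hVσ
    (hE.apply_eq_self_of_subset hσI hσ Set.inter_subset_left hu)
  have hVv : ⟪V v, v⟫_ℂ = 0 := hE.inner_apply_eq_zero_of_compression_eq_zero hτ hVτ
    (hE.apply_eq_self_of_subset hτI hτ Set.inter_subset_left hv)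
  have huu : (⟪u, u⟫_ℂ).re = ‖u‖ ^ 2 := inner_self_eq_norm_sq (𝕜 := ℂ) u
  have hvv : (⟪v, v⟫_ℂ).re = ‖v‖ ^ 2 := inner_self_eq_norm_sq (𝕜 := ℂ) v
  have hnorm : ‖y‖ ^ 2 = ‖u‖ ^ 2 + ‖v‖ ^ 2 := by
    have := @norm_add_sq ℂ _ _ _ _ u v
    rw [hyuv, this, huv]
    simp
  have hcross : ∀ a b : H, -(‖V‖ * ‖a‖ * ‖b‖) ≤ (⟪V a, b⟫_ℂ).re := fun a b => by
    have h1 := (abs_le.1 ((Complex.abs_re_le_norm _).trans (norm_inner_le_norm (𝕜 := ℂ) (V a) b))).1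
    have h2 := mul_le_mul_of_nonneg_right (V.le_opNorm a) (norm_nonneg b)
    linarith
  have hform : (⟪(A + V) y - (l : ℂ) • y, y⟫_ℂ).re = (⟪A u, u⟫_ℂ).re + (⟪A v, v⟫_ℂ).re
      + (⟪V u, v⟫_ℂ).re + (⟪V v, u⟫_ℂ).re - l * (‖u‖ ^ 2 + ‖v‖ ^ 2) := by
    rw [hyuv]
    simp only [add_apply, map_add, inner_add_left, inner_add_right,
      inner_sub_left, inner_smul_left, smul_add, hAuv, hAvu, hVu, hVv, huv, hvu,
      Complex.conj_ofReal, Complex.add_re, Complex.sub_re, Complex.re_ofReal_mul, huu, hvv,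
      Complex.zero_re, mul_zero]
    ring
  have hgap : ∀ s ∈ σ ∪ τ, l ≤ s → l + m ≤ s := fun s hs hls => by
    have := hm s hs
    rw [abs_of_nonneg (sub_nonneg.2 hls)] at this
    linarith
  have hσm : σ ∩ Set.Ici l ⊆ Set.Ici (l + m) := fun s hs => hgap s (Or.inl hs.1) hs.2
  have hτm : τ ∩ Set.Ici l ⊆ Set.Ici (l + m) := fun s hs => hgap s (Or.inr hs.1) hs.2
  have hcases : σ ∩ Set.Ici l ⊆ Set.Ici (l + m + d) ∨ τ ∩ Set.Ici l ⊆ Set.Ici (l + m + d) := by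
    by_contra! hcon
    obtain ⟨⟨s, hs, hs'⟩, ⟨t, ht, ht'⟩⟩ := hcon.imp Set.not_subset.1 Set.not_subset.1
    have h1 := hσm hs
    have h2 := hτm ht
    have h3 := hd s hs.1 t ht.1
    rw [Set.mem_Ici] at h1 h2 hs' ht'
    exact absurd h3 (not_le.2 (abs_lt.2 ⟨by linarith, by linarith⟩))
  have h1 := hcross u v
  have h2 := hcross v u
  rw [hform, hnorm]
  rcases hcases with h | h
  · have h3 := hE.le_re_inner_of_subset_Ici hA hσI h hu
    have h4 := hE.le_re_inner_of_subset_Ici hA hτI hτm hv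
    have h5 := two_mul_mul_mul_le (a := ‖v‖) (b := ‖u‖) hδ (by linarith : 0 ≤ δ + d) hδV
    linarith
  · have h3 := hE.le_re_inner_of_subset_Ici hA hσI hσm hu
    have h4 := hE.le_re_inner_of_subset_Ici hA hτI h hv
    have h5 := two_mul_mul_mul_le (a := ‖u‖) (b := ‖v‖) hδ (by linarith : 0 ≤ δ + d) hδV
    linarith

/-- An off-diagonal perturbation of `A` is bounded below at every point whose distance to the
spectrum of `A` exceeds the spectral shift `δ`. -/
theorem le_norm_sub_of_offDiagonal (hE : IsSpectralMeasure A E) (hA : IsSelfAdjoint A)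
    {V : H →L[ℂ] H} (hV : IsSelfAdjoint V) {σ τ : Set ℝ} (hσ : MeasurableSet σ)
    (hτ : MeasurableSet τ) (hστ : Disjoint σ τ) (htot : E (σ ∪ τ) = 1)
    (hVσ : E σ * V * E σ = 0) (hVτ : E τ * V * E τ = 0)
    {d δ m l : ℝ} (hd : ∀ s ∈ σ, ∀ t ∈ τ, d ≤ |s - t|) (hd0 : 0 ≤ d) (hδ : 0 ≤ δ)
    (hδV : δ * (δ + d) = ‖V‖ ^ 2) (hm : ∀ s ∈ σ ∪ τ, m ≤ |s - l|) (x : H) :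
    (m - δ) * ‖x‖ ≤ ‖(A + V) x - (l : ℂ) • x‖ := by
  have hI : MeasurableSet (Set.Ici l) := measurableSet_Ici
  have hI' : MeasurableSet (Set.Iio l) := measurableSet_Iio
  have hdisj : Disjoint (Set.Ici l) (Set.Iio l) := (Set.Iio_disjoint_Ici le_rfl).symm
  set p := E (Set.Ici l) x
  set q := E (Set.Iio l) x
  have hp : E (Set.Ici l) p = p := hE.apply_apply_self hI x
  have hq : E (Set.Iio l) q = q := hE.apply_apply_self hI' x
  have hxpq : x = p + q := by
    have h := congrArg (· x) (hE.map_union hI hI' hdisj)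
    rw [Set.union_comm, Set.Iio_union_Ici, hE.map_univ] at h
    simpa using h
  have hpq : ⟪p, q⟫_ℂ = 0 := hE.inner_eq_zero_of_disjoint hI hI' hdisj hp hq
  have hpos := hE.le_re_inner_of_offDiagonal hA hσ hτ hστ htot hVσ hVτ hd hd0 hδ hδV hm hp
  have hneg := hE.neg.le_re_inner_of_offDiagonal hA.neg (V := -V) (l := -l) (m := m) (y := q)
    hσ.neg hτ.neg (hστ.preimage _) (by simpa [Set.union_neg] using htot)
    (by simpa using hVσ) (by simpa using hVτ)
    (fun s hs t ht => by
      have := hd _ hs _ ht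
      rwa [← neg_sub', abs_neg] at this) hd0 hδ (by rwa [norm_neg])
    (fun s hs => by
      have := hm (-s) (by simpa using hs)
      rwa [← abs_neg, neg_sub, sub_neg_eq_add, add_comm, ← sub_neg_eq_add] at this)
    (hE.apply_eq_self_of_subset hI' (measurableSet_Ici.neg) (fun s hs => by
      simpa using (Set.mem_Iio.1 hs).le) hq)
  have hneg' : (-A + -V) q - ((-l : ℝ) : ℂ) • q = -((A + V) q - (l : ℂ) • q) := by
    simp
    abel
  rw [hneg', inner_neg_left, Complex.neg_re] at hneg
  have hB : IsSelfAdjoint (A + V - algebraMap ℝ (H →L[ℂ] H) l) :=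
    (hA.add hV).sub (IsSelfAdjoint.algebraMap _ (IsSelfAdjoint.all l))
  have hBx : ∀ z, (A + V) z - (l : ℂ) • z = (A + V - algebraMap ℝ (H →L[ℂ] H) l) z := fun z => by
    simp [Algebra.algebraMap_eq_smul_one]
  rw [hBx] at hpos hneg ⊢
  set S := A + V - algebraMap ℝ (H →L[ℂ] H) l
  have hsymm : (⟪S q, p⟫_ℂ).re = (⟪S p, q⟫_ℂ).re := by
    rw [show ⟪S p, q⟫_ℂ = ⟪p, S q⟫_ℂ from hB.isSymmetric p q]
    exact inner_re_symm (𝕜 := ℂ) _ _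
  have hform : (⟪S x, p - q⟫_ℂ).re = (⟪S p, p⟫_ℂ).re - (⟪S q, q⟫_ℂ).re := by
    rw [hxpq, map_add, inner_add_left, inner_sub_right, inner_sub_right]
    simp only [Complex.add_re, Complex.sub_re, hsymm]
    ring
  have hnorm : ‖x‖ ^ 2 = ‖p‖ ^ 2 + ‖q‖ ^ 2 := by
    have := @norm_add_sq ℂ _ _ _ _ p q
    rw [hxpq, this, hpq]
    simp
  have hnorm' : ‖p - q‖ = ‖x‖ := by
    have := @norm_sub_sq ℂ _ _ _ _ p q
    rw [hpq] at this
    refine (sq_eq_sq₀ (norm_nonneg _) (norm_nonneg _)).1 ?_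
    rw [this, hnorm]
    simp
  have hle : (m - δ) * ‖x‖ ^ 2 ≤ ‖S x‖ * ‖x‖ := by
    rw [← hnorm']
    refine le_trans ?_ ((Complex.re_le_norm _).trans (norm_inner_le_norm (𝕜 := ℂ) (S x) (p - q)))
    rw [hform, hnorm', hnorm]
    linarith
  rcases (norm_nonneg x).eq_or_lt with h0 | h0
  · simp [← h0]
  · exact le_of_mul_le_mul_right (by linarith) h0

end IsSpectralMeasure

theorem half_arctan_shift_spec {v d δ : ℝ} (hv : 0 ≤ v) (hd : 0 < d)
    (hδ : δ = v * Real.tan (Real.arctan (2 * v / d) / 2)) :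
    0 ≤ δ ∧ δ * (δ + d) = v ^ 2 := by
  have h0 : 0 ≤ Real.arctan (2 * v / d) := Real.arctan_nonneg.2 (by positivity)
  have h1 := Real.arctan_lt_pi_div_two (2 * v / d)
  have ht : 0 ≤ Real.tan (Real.arctan (2 * v / d) / 2) :=
    Real.tan_nonneg_of_nonneg_of_le_pi_div_two (by linarith) (by linarith)
  have h2 := Real.tan_two_mul (x := Real.arctan (2 * v / d) / 2)
  rw [mul_div_cancel₀ _ two_ne_zero, Real.tan_arctan] at h2
  refine ⟨hδ ▸ mul_nonneg hv ht, ?_⟩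
  rcases hv.eq_or_lt with rfl | hv
  · simp [hδ]
  set t := Real.tan (Real.arctan (2 * v / d) / 2)
  have hne : 1 - t ^ 2 ≠ 0 := fun h => by
    rw [h, div_zero] at h2
    have : 0 < 2 * v / d := by positivity
    linarith
  rw [div_eq_div_iff hd.ne' hne] at h2
  rw [hδ]
  linear_combination (-v / 2) * h2

/-- **Theorem (perturbation of spectra, Theorem 2.1 (i)).**
If `spec A = σ ∪ Σ` with `dist (σ, Σ) = d > 0` and the bounded self-adjoint perturbation
`V` is off-diagonal with respect to `H = Ran E_A(σ) ⊕ Ran E_A(Σ)`, then the spectrum of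
`B = A + V` is contained in the closed `δ_V`-neighborhood of the spectrum of `A`, where
`δ_V = ‖V‖ tan((1/2) arctan (2‖V‖/d))`. -/
theorem spectrum_subset_closed_neighborhood
    {H : Type*} [NormedAddCommGroup H] [InnerProductSpace ℂ H] [CompleteSpace H]
    [TopologicalSpace.SeparableSpace H]
    (A V B : H →L[ℂ] H) (hA : IsSelfAdjoint A) (hV : IsSelfAdjoint V) (hB : B = A + V)
    (σ Sig : Set ℝ) (hσc : IsClosed σ) (hSigc : IsClosed Sig) (hdisj : Disjoint σ Sig)
    (hspec : spectrum ℝ A = σ ∪ Sig)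
    (d : ℝ) (hd : d = sInf (Set.image2 dist σ Sig)) (hd0 : 0 < d)
    (EA : Set ℝ → H →L[ℂ] H) (hEA : IsSpectralMeasure A EA)
    (hoff₁ : EA σ * V * EA σ = 0) (hoff₂ : EA Sig * V * EA Sig = 0)
    (δ : ℝ) (hδ : δ = ‖V‖ * Real.tan (Real.arctan (2 * ‖V‖ / d) / 2)) :
    spectrum ℝ B ⊆ {x : ℝ | Metric.infDist x (spectrum ℝ A) ≤ δ} := by
  subst hB
  intro x hx
  rw [Set.mem_ofPred_eq]
  by_contra! hlt
  obtain ⟨hδ0, hδV⟩ := half_arctan_shift_spec (norm_nonneg V) hd0 hδ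
  refine (hA.add hV).notMem_spectrum_of_bound (sub_pos.2 hlt) (fun y => ?_) hx
  refine hEA.le_norm_sub_of_offDiagonal hA hV hσc.measurableSet hSigc.measurableSet hdisj
    (hspec ▸ hEA.map_spectrum hA) hoff₁ hoff₂ (fun s hs t ht => ?_) hd0.le hδ0 hδV
    (fun s hs => ?_) y
  · rw [hd, ← Real.dist_eq]
    refine csInf_le ⟨0, ?_⟩ (Set.mem_image2_of_mem hs ht)
    rintro _ ⟨a, -, b, -, rfl⟩
    exact dist_nonneg
  · rw [← Real.dist_eq, dist_comm]
    exact Metric.infDist_le_dist_of_mem (hspec ▸ hs)
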